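/- arXiv:2003.13113 — 2 statements merged into one kernel-verified Lean document; each statement's English description precedes it below -/
import Mathlib

section
/- The representation ρ of G_n on L²(M_n(ℝ)) is irreducible: if K is a closed linear subspace of L²(M_n(ℝ)) with ρ[x,h](K) ⊆ K for every [x,h] ∈ G_n, then K = {0} or K = L²(M_n(ℝ)). -/
open MeasureTheory
open scoped ENNReal

noncomputable section

/-- `M_n(ℝ)`, the `n × n` real matrices, identified with `ℝ^{n²}`. -/
abbrev Mn (n : ℕ) : Type := Matrix (Fin n) (Fin n) ℝ

instance (n : ℕ) : MeasureSpace (Mn n) := inferInstanceAs (MeasureSpace (Fin n → Fin n → ℝ))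

/-- `L²(M_n(ℝ)) ≅ L²(ℝ^{n²})`. -/
abbrev L2 (n : ℕ) := Lp (α := Mn n) ℂ 2 volume

section Helpers

open scoped FourierTransform SchwartzMap RealInnerProductSpace

section gen
variable {E : Type*} [NormedAddCommGroup E] [InnerProductSpace ℝ E] [FiniteDimensional ℝ E]
  [MeasurableSpace E] [BorelSpace E]

lemma fourier_affine (φ : E → ℂ) (A : E ≃L[ℝ] E) (B : E → E)
    (hB : ∀ y ξ, ⟪A.symm y, ξ⟫ = ⟪y, B ξ⟫) (x ξ : E) :
    𝓕 (fun y => φ (A (y - x))) ξ =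
      ((|(A : E →L[ℝ] E).det|⁻¹ : ℝ) : ℂ) * (Real.fourierChar (-⟪x, ξ⟫) • 𝓕 φ (B ξ)) := by
  have h0 : (A : E →L[ℝ] E).det ≠ 0 := A.toLinearEquiv.isUnit_det'.ne_zero
  rw [Real.fourier_eq, Real.fourier_eq]
  rw [← integral_add_right_eq_self _ x]
  simp only [add_sub_cancel_right]
  have key := integral_image_eq_integral_abs_det_fderiv_smul volume (s := Set.univ)
    (f := A) (f' := fun _ => (A : E →L[ℝ] E)) MeasurableSet.univ
    (fun x _ => A.hasFDerivAt.hasFDerivWithinAt) A.injective.injOn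
    (fun v => Real.fourierChar (-⟪v, B ξ⟫) • φ v)
  rw [Set.image_univ, A.surjective.range_eq, setIntegral_univ, setIntegral_univ] at key
  rw [key, Circle.smul_def, ← integral_smul, ← integral_const_mul]
  refine integral_congr_ae (.of_forall fun v => ?_)
  simp only [← hB, ContinuousLinearEquiv.symm_apply_apply, inner_add_left, neg_add,
    AddChar.map_add_eq_mul, Circle.smul_def, Circle.coe_mul, smul_eq_mul, Complex.real_smul]
  push_cast
  have : ((|(A : E →L[ℝ] E).det| : ℝ) : ℂ) ≠ 0 := by simpa using h0
  field_simp

lemma fourier_U (A : E ≃L[ℝ] E) (B : E → E) (hBm : Measure.QuasiMeasurePreserving B volume volume)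
    (hB : ∀ y ξ, ⟪A.symm y, ξ⟫ = ⟪y, B ξ⟫) (x : E) (c : ℝ)
    (U : Lp (α := E) ℂ 2 volume →L[ℂ] Lp (α := E) ℂ 2 volume)
    (hU : ∀ φ : Lp (α := E) ℂ 2 volume, U φ =ᵐ[volume] fun y => c • φ (A (y - x)))
    (f : Lp (α := E) ℂ 2 volume) :
    (𝓕 (U f) : Lp (α := E) ℂ 2 volume) =ᵐ[volume] fun ξ =>
      ((c * |(A : E →L[ℝ] E).det|⁻¹ : ℝ) : ℂ) *
        (Real.fourierChar (-⟪x, ξ⟫) • (𝓕 f : Lp (α := E) ℂ 2 volume) (B ξ)) := by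
  have hA : Measure.QuasiMeasurePreserving (fun y => A (y - x)) (volume : Measure E) volume := by
    have h1 := Measure.ContinuousLinearMap.quasiMeasurePreserving volume (A : E →L[ℝ] E)
      A.toLinearEquiv.isUnit_det'.ne_zero
    exact h1.comp (measurePreserving_sub_right volume x).quasiMeasurePreserving
  obtain ⟨u, hu⟩ : ∃ u : ℕ → 𝓢(E, ℂ), Filter.Tendsto (fun k => (u k).toLp 2 volume)
      Filter.atTop (nhds f) := by
    have hd := SchwartzMap.denseRange_toLpCLM (E := E) (F := ℂ) (p := 2) (μ := volume)
      ENNReal.ofNat_ne_top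
    obtain ⟨s, hs, hs'⟩ := mem_closure_iff_seq_limit.1 (hd f)
    choose u hu using hs
    refine ⟨u, ?_⟩
    have : s = fun k => (u k).toLp 2 volume := by
      funext k; rw [← hu k]; rfl
    rwa [← this]
  have hF : Continuous (fun q : Lp (α := E) ℂ 2 volume => (𝓕 q : Lp (α := E) ℂ 2 volume)) :=
    (Lp.fourierTransformₗᵢ E ℂ).continuous
  have t1 := (hF.tendsto f).comp hu
  have t2 := ((hF.comp U.continuous).tendsto f).comp hu
  obtain ⟨n1, hn1, a1⟩ := (tendstoInMeasure_of_tendsto_Lp t1).exists_seq_tendsto_ae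
  obtain ⟨n2, hn2, a2⟩ := (tendstoInMeasure_of_tendsto_Lp (t2.comp hn1.tendsto_atTop)).exists_seq_tendsto_ae
  have eqs : ∀ k, (𝓕 (U ((u k).toLp 2 volume)) : Lp (α := E) ℂ 2 volume) =ᵐ[volume] fun ξ =>
      ((c * |(A : E →L[ℝ] E).det|⁻¹ : ℝ) : ℂ) *
        (Real.fourierChar (-⟪x, ξ⟫) •
          (𝓕 ((u k).toLp 2 volume) : Lp (α := E) ℂ 2 volume) (B ξ)) := by
    intro k
    set φ := u k
    let ψ : 𝓢(E, ℂ) := (c : ℂ) • SchwartzMap.compSubConstCLM ℂ x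
      (SchwartzMap.compCLMOfContinuousLinearEquiv ℂ A φ)
    have hψ : ∀ y, ψ y = c * φ (A (y - x)) := fun y => by
      simp [ψ, SchwartzMap.compSubConstCLM_apply]
    have hUψ : U (φ.toLp 2 volume) = ψ.toLp 2 volume := by
      refine Lp.ext ?_
      filter_upwards [hU (φ.toLp 2 volume), ψ.coeFn_toLp 2 volume,
        hA.ae (φ.coeFn_toLp 2 volume)] with y h1 h2 h3
      rw [h1, h2, h3, hψ, Complex.real_smul]
    rw [hUψ, SchwartzMap.toLp_fourier_eq, SchwartzMap.toLp_fourier_eq]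
    filter_upwards [(𝓕 ψ).coeFn_toLp 2 volume, hBm.ae ((𝓕 φ).coeFn_toLp 2 volume)] with ξ h1 h2
    rw [h1, h2, SchwartzMap.fourier_coe, SchwartzMap.fourier_coe]
    have : (ψ : E → ℂ) = (c : ℂ) • fun y => φ (A (y - x)) := by
      funext y; simp [hψ]
    rw [this]
    have h5 := fourier_affine φ A B hB x ξ
    have h6 : 𝓕 ((c : ℂ) • fun y => φ (A (y - x))) ξ = c * 𝓕 (fun y => φ (A (y - x))) ξ := by
      rw [Real.fourier_eq, Real.fourier_eq, ← integral_const_mul]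
      refine integral_congr_ae (.of_forall fun v => ?_)
      simp only [Pi.smul_apply, Circle.smul_def, smul_eq_mul]
      ring
    rw [h6, h5]
    push_cast
    ring
  have eqs' := ae_all_iff.2 eqs
  filter_upwards [hBm.ae a1, a2, eqs'] with ξ h1 h2 h3
  refine tendsto_nhds_unique h2 ?_
  have h1' := ((h1.comp hn2.tendsto_atTop).const_smul (Real.fourierChar (-⟪x, ξ⟫))).const_mul
    ((c * |(A : E →L[ℝ] E).det|⁻¹ : ℝ) : ℂ)
  refine h1'.congr fun k => ?_
  exact (h3 _).symm

lemma ae_zero_of_fourier {w : E → ℂ} (hw : Integrable w volume)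
    (h : ∀ x : E, 𝓕 w x = 0) : w =ᵐ[volume] 0 := by
  refine ae_eq_zero_of_integral_contDiff_smul_eq_zero hw.locallyIntegrable fun g hg hgc => ?_
  have hc : HasCompactSupport (fun y => (g y : ℂ)) := hgc.comp_left (g := fun t : ℝ => (t : ℂ)) rfl
  have hd : ContDiff ℝ (⊤ : ℕ∞) (fun y => (g y : ℂ)) := Complex.ofRealCLM.contDiff.comp hg
  let ψ : 𝓢(E, ℂ) := hc.toSchwartzMap hd
  have hψ : ∀ y, ψ y = g y := fun y => rfl
  let φ : 𝓢(E, ℂ) := 𝓕⁻ ψ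
  have hφ : 𝓕 φ = ψ := by simp [φ]
  have := VectorFourier.integral_fourierIntegral_smul_eq_flip (L := innerₗ E)
    (μ := volume) (ν := volume) Real.continuous_fourierChar continuous_inner hw φ.integrable
  have h1 : VectorFourier.fourierIntegral Real.fourierChar volume (innerₗ E) w = 0 := by
    funext x; exact h x
  have h2 : VectorFourier.fourierIntegral Real.fourierChar volume (innerₗ E).flip φ = ψ := by
    rw [← hφ, SchwartzMap.fourier_coe, flip_innerₗ]; rfl
  rw [h1, h2] at this
  simp only [Pi.zero_apply, hψ, smul_eq_mul, zero_mul, integral_zero] at this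
  rw [this]
  refine integral_congr_ae (.of_forall fun v => ?_)
  simp [mul_comm]

lemma qmp (A : E ≃L[ℝ] E) : Measure.QuasiMeasurePreserving A (volume : Measure E) volume :=
  Measure.ContinuousLinearMap.quasiMeasurePreserving volume (A : E →L[ℝ] E)
      A.toLinearEquiv.isUnit_det'.ne_zero

lemma memLp_comp (B : E ≃L[ℝ] E) (f : Lp (α := E) ℂ 2 volume) :
    MemLp (fun ξ => f (B ξ)) 2 volume := by
  have h := Measure.map_linearMap_addHaar_eq_smul_addHaar (volume : Measure E)
    (f := (B.toLinearEquiv : E →ₗ[ℝ] E)) B.toLinearEquiv.isUnit_det'.ne_zero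
  have h2 : MemLp f 2 (Measure.map B volume) := by
    have h3 : Measure.map B volume = _ := h
    rw [h3]
    exact (Lp.memLp f).smul_measure ENNReal.ofReal_ne_top
  exact h2.comp_of_map B.continuous.measurable.aemeasurable

lemma ortho (A B : E ≃L[ℝ] E)
    (hB : ∀ y ξ, ⟪A.symm y, ξ⟫ = ⟪y, B ξ⟫) (c : ℝ) (hc : c ≠ 0)
    (f g : Lp (α := E) ℂ 2 volume)
    (H : ∀ x : E, ∃ U : Lp (α := E) ℂ 2 volume →L[ℂ] Lp (α := E) ℂ 2 volume,
      (∀ φ : Lp (α := E) ℂ 2 volume, U φ =ᵐ[volume] fun y => c • φ (A (y - x))) ∧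
      inner ℂ g (U f) = 0) :
    ∀ᵐ ξ : E, (𝓕 f : Lp (α := E) ℂ 2 volume) (B ξ) = 0 ∨ (𝓕 g : Lp (α := E) ℂ 2 volume) ξ = 0 := by
  have h0 : (A : E →L[ℝ] E).det ≠ 0 := A.toLinearEquiv.isUnit_det'.ne_zero
  set F := (𝓕 f : Lp (α := E) ℂ 2 volume)
  set G := (𝓕 g : Lp (α := E) ℂ 2 volume)
  have hw : Integrable (fun ξ => inner ℂ (G ξ) (F (B ξ))) volume := by
    have hm := memLp_comp B F
    refine (L2.integrable_inner (𝕜 := ℂ) G hm.toLp).congr ?_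
    filter_upwards [hm.coeFn_toLp] with ξ h
    rw [h]
  have hz := ae_zero_of_fourier hw (fun x => by
    obtain ⟨U, hU, hx⟩ := H x
    have h1 := fourier_U A B (qmp B) hB x c U hU f
    rw [← Lp.inner_fourier_eq, L2.inner_def] at hx
    have h2 : ∫ ξ, ((c * |(A : E →L[ℝ] E).det|⁻¹ : ℝ) : ℂ) *
        (Real.fourierChar (-⟪ξ, x⟫) • inner ℂ (G ξ) (F (B ξ))) = 0 := by
      rw [← hx]
      refine integral_congr_ae ?_
      filter_upwards [h1] with ξ h
      rw [h]
      simp only [RCLike.inner_apply, Circle.smul_def, smul_eq_mul, real_inner_comm]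
      ring
    rw [integral_const_mul] at h2
    rw [Real.fourier_eq]
    refine (mul_eq_zero.1 h2).resolve_left ?_
    simpa using ⟨hc, h0⟩)
  filter_upwards [hz] with ξ h
  simpa [or_comm] using h
end gen

lemma mp_uncurry (n : ℕ) : MeasurePreserving (fun (M : Fin n → Fin n → ℝ) (p : Fin n × Fin n) => M p.1 p.2)
    volume volume := by
  refine ⟨by fun_prop, ?_⟩
  symm
  refine Measure.pi_eq fun s hs => ?_
  rw [Measure.map_apply (by fun_prop) (MeasurableSet.univ_pi hs)]
  have : (fun (M : Fin n → Fin n → ℝ) (p : Fin n × Fin n) => M p.1 p.2) ⁻¹' Set.univ.pi s =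
      Set.univ.pi (fun i => Set.univ.pi fun j => s (i, j)) := by
    ext M; simp [Set.mem_pi]
  rw [this, volume_pi_pi]
  simp_rw [volume_pi_pi]
  rw [Fintype.prod_prod_type]


/-- Euclidean model of the matrix space. -/
abbrev EM (n : ℕ) : Type := EuclideanSpace ℝ (Fin n × Fin n)

/-- Euclidean vectors as matrices. -/
def mE (n : ℕ) : EM n ≃ₗ[ℝ] Mn n where
  toFun u := fun i j => u (i, j)
  invFun M := WithLp.toLp 2 fun p => M p.1 p.2
  map_add' _ _ := rfl
  map_smul' _ _ := rfl
  left_inv _ := rfl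
  right_inv _ := rfl

lemma mp_symm (n : ℕ) : MeasurePreserving (mE n).symm volume volume :=
  (PiLp.volume_preserving_toLp (Fin n × Fin n)).comp (mp_uncurry n)

lemma continuous_mE (n : ℕ) : Continuous (mE n) := by
  refine continuous_matrix fun i j => ?_
  change Continuous fun u : EM n => u (i, j)
  fun_prop

lemma continuous_mE_symm (n : ℕ) : Continuous (mE n).symm := by
  change Continuous fun M : Mn n => (WithLp.toLp 2 fun p => M p.1 p.2 : EM n)
  fun_prop

lemma measurable_mE (n : ℕ) : Measurable (mE n) := by
  refine measurable_pi_lambda _ fun i => measurable_pi_lambda _ fun j => ?_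
  change Measurable fun u : EM n => u (i, j)
  fun_prop

lemma mp_mE (n : ℕ) : MeasurePreserving (mE n) volume volume := by
  let e : Mn n ≃ᵐ EM n :=
    { toEquiv := (mE n).symm.toEquiv
      measurable_toFun := (mp_symm n).measurable
      measurable_invFun := measurable_mE n }
  exact MeasurePreserving.symm e (mp_symm n)

/-- Left multiplication. -/
def leftMulE {n : ℕ} (h k : Mn n) (hk : h * k = 1) (kh : k * h = 1) : EM n ≃L[ℝ] EM n :=
  LinearEquiv.toContinuousLinearEquiv
  { toFun := fun u => (mE n).symm (h * mE n u)
    invFun := fun u => (mE n).symm (k * mE n u)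
    map_add' := fun u v => by simp [mul_add]
    map_smul' := fun c u => by simp
    left_inv := fun u => by simp [← mul_assoc, kh]
    right_inv := fun u => by simp [← mul_assoc, hk] }

/-- Right multiplication. -/
def rightMulE {n : ℕ} (h k : Mn n) (hk : h * k = 1) (kh : k * h = 1) : EM n ≃L[ℝ] EM n :=
  LinearEquiv.toContinuousLinearEquiv
  { toFun := fun u => (mE n).symm (mE n u * h)
    invFun := fun u => (mE n).symm (mE n u * k)
    map_add' := fun u v => by simp [add_mul]
    map_smul' := fun c u => by simp
    left_inv := fun u => by simp [mul_assoc, hk]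
    right_inv := fun u => by simp [mul_assoc, kh] }

lemma inner_mE {n : ℕ} (u v : EM n) : ⟪u, v⟫ = ((mE n u).transpose * mE n v).trace := by
  rw [PiLp.inner_apply, Fintype.sum_prod_type, Finset.sum_comm]
  simp only [Matrix.trace, Matrix.diag, Matrix.mul_apply, Matrix.transpose_apply]
  refine Finset.sum_congr rfl fun i _ => Finset.sum_congr rfl fun j _ => ?_
  change _ = u (j, i) * v (j, i)
  simp [mul_comm]

lemma ae_det (n : ℕ) : ∀ᵐ u : EM n, (mE n u).det ≠ 0 := by
  have hc := continuous_mE n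
  let I : EM n := (mE n).symm 1
  have hI : ∀ (u : EM n) (t : ℝ), mE n (u + t • I) = mE n u + t • (1 : Mn n) := fun u t => by
    simp [I]
  have h1 : ∀ u : EM n, ∀ᵐ t : ℝ, (mE n (u + t • I)).det ≠ 0 := by
    intro u
    have hfin : ((Matrix.charpoly (-(mE n u))).roots.toFinset : Set ℝ).Finite :=
      Finset.finite_toSet _
    filter_upwards [hfin.measure_zero volume |> compl_mem_ae_iff.2] with t ht h0
    apply ht
    simp only [Finset.mem_coe, Multiset.mem_toFinset]
    rw [Polynomial.mem_roots (Matrix.charpoly_monic _).ne_zero, Polynomial.IsRoot,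
      Matrix.eval_charpoly]
    rw [hI] at h0
    rw [← h0]
    congr 1
    rw [sub_neg_eq_add, add_comm, Matrix.scalar_apply, Matrix.smul_one_eq_diagonal]
  have hms : MeasurableSet {p : EM n × ℝ | (mE n (p.1 + p.2 • I)).det ≠ 0} := by
    have : Continuous fun p : EM n × ℝ => (mE n (p.1 + p.2 • I)).det :=
      Continuous.matrix_det (hc.comp (by fun_prop))
    exact (isOpen_ne_fun this continuous_const).measurableSet
  have h2 := (Measure.ae_ae_comm (μ := (volume : Measure (EM n))) (ν := (volume : Measure ℝ))
    (p := fun u t => (mE n (u + t • I)).det ≠ 0) hms).1 (.of_forall h1)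
  obtain ⟨t, ht⟩ := h2.exists
  have h3 := (measurePreserving_sub_right (volume : Measure (EM n)) (t • I)).quasiMeasurePreserving.ae ht
  filter_upwards [h3] with u hu
  simpa using hu

lemma core {n : ℕ} (f g : Lp (α := EM n) ℂ 2 volume) (hf : f ≠ 0) (c : Mn n → ℝ)
    (hc : ∀ h : Mn n, h.det ≠ 0 → c h ≠ 0)
    (H : ∀ h : Mn n, h.det ≠ 0 → ∀ x : EM n,
      ∃ U : Lp (α := EM n) ℂ 2 volume →L[ℂ] Lp (α := EM n) ℂ 2 volume,
      (∀ φ : Lp (α := EM n) ℂ 2 volume, U φ =ᵐ[volume]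
        fun y => c h • φ ((mE n).symm (h⁻¹ * mE n (y - x)))) ∧
      inner ℂ g (U f) = 0) : g = 0 := by
  set F := (𝓕 f : Lp (α := EM n) ℂ 2 volume) with hF
  set G := (𝓕 g : Lp (α := EM n) ℂ 2 volume) with hG
  have h1 : ∀ h : Mn n, h.det ≠ 0 →
      ∀ᵐ ξ : EM n, F ((mE n).symm (h * mE n ξ)) = 0 ∨ G ξ = 0 := by
    intro k hk
    have hdet : k.transpose.det ≠ 0 := by rwa [Matrix.det_transpose]
    have u1 : IsUnit k.det := isUnit_iff_ne_zero.2 hk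
    have u2 : IsUnit k.transpose.det := isUnit_iff_ne_zero.2 hdet
    refine ortho (leftMulE k.transpose⁻¹ k.transpose (Matrix.nonsing_inv_mul _ u2)
      (Matrix.mul_nonsing_inv _ u2)) (leftMulE k k⁻¹ (Matrix.mul_nonsing_inv _ u1)
      (Matrix.nonsing_inv_mul _ u1)) ?_ (c k.transpose) (hc _ hdet) f g
      (fun x => H _ hdet x)
    intro y ξ
    change ⟪(mE n).symm (k.transpose * mE n y), ξ⟫ = ⟪y, (mE n).symm (k * mE n ξ)⟫
    simp only [inner_mE, LinearEquiv.apply_symm_apply, Matrix.transpose_mul,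
      Matrix.transpose_transpose, Matrix.mul_assoc]
  have hFm : Measurable F := (Lp.stronglyMeasurable F).measurable
  have hGm : Measurable G := (Lp.stronglyMeasurable G).measurable
  have hmul : Continuous fun p : EM n × EM n => (mE n).symm (mE n p.1 * mE n p.2) :=
    (continuous_mE_symm n).comp
      (((continuous_mE n).comp continuous_fst).matrix_mul ((continuous_mE n).comp continuous_snd))
  have hms : MeasurableSet {p : EM n × EM n |
      F ((mE n).symm (mE n p.1 * mE n p.2)) = 0 ∨ G p.2 = 0} :=
    ((hFm.comp hmul.measurable) (measurableSet_singleton 0)).union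
      ((hGm.comp measurable_snd) (measurableSet_singleton 0))
  have h2 := (Measure.ae_ae_comm (μ := (volume : Measure (EM n))) (ν := (volume : Measure (EM n)))
    (p := fun u ξ => F ((mE n).symm (mE n u * mE n ξ)) = 0 ∨ G ξ = 0) hms).1
      ((ae_det n).mono fun u hu => h1 _ hu)
  have hG0 : G = 0 := by
    refine Lp.ext ?_
    filter_upwards [h2, ae_det n, Lp.coeFn_zero ℂ 2 (volume : Measure (EM n))] with ξ h3 hξ hz
    rw [hz]
    by_contra hne
    have hne' : G ξ ≠ 0 := hne
    have u1 : IsUnit (mE n ξ).det := isUnit_iff_ne_zero.2 hξ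
    let R := rightMulE (mE n ξ) (mE n ξ)⁻¹ (Matrix.mul_nonsing_inv _ u1) (Matrix.nonsing_inv_mul _ u1)
    have h4 : ∀ᵐ u : EM n, F (R u) = 0 := h3.mono fun u hu => hu.resolve_right hne'
    have h5 : ∀ᵐ u : EM n, F (R (R.symm u)) = 0 := (qmp R.symm).ae h4
    simp only [ContinuousLinearEquiv.apply_symm_apply] at h5
    have hF0 : F = 0 := by
      refine Lp.ext ?_
      filter_upwards [h5, Lp.coeFn_zero ℂ 2 (volume : Measure (EM n))] with u hu hz
      rw [hu, hz]; rfl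
    apply hf
    rw [← norm_eq_zero, ← Lp.norm_fourier_eq, ← hF, hF0, norm_zero]
  rw [← norm_eq_zero, ← Lp.norm_fourier_eq, ← hG, hG0, norm_zero]

end Helpers

/-- The representation `ρ` of `G_n = M_n(ℝ) ⋊ GL_n(ℝ)` on `L²(M_n(ℝ))`,
given by `ρ[x,h]g (y) = |det h|^{-n/2} g (h⁻¹(y - x))`, is irreducible: any closed
`ρ`-invariant subspace `K` of `L²(M_n(ℝ))` is `{0}` or the whole space. -/
theorem stmt_3 (n : ℕ) (hn : 1 ≤ n)
    (ρ : Mn n × Mn n → (L2 n ≃ₗᵢ[ℂ] L2 n))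
    (hρ : ∀ x h : Mn n, h.det ≠ 0 → ∀ g : L2 n,
      ⇑(ρ (x, h) g) =ᵐ[volume]
        fun y : Mn n => (|h.det| ^ (-(n : ℝ) / 2)) • g (h⁻¹ * (y - x)))
    (K : Submodule ℂ (L2 n)) (hK : IsClosed (K : Set (L2 n)))
    (hinv : ∀ x h : Mn n, h.det ≠ 0 → ∀ g ∈ K, ρ (x, h) g ∈ K) :
    K = ⊥ ∨ K = ⊤ := by
  by_cases hb : K = ⊥
  · exact .inl hb
  right
  obtain ⟨f, hfK, hf0⟩ := Submodule.exists_mem_ne_zero_of_ne_bot hb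
  haveI : CompleteSpace K := hK.completeSpace_coe
  rw [← Submodule.orthogonal_eq_bot_iff, Submodule.eq_bot_iff]
  intro g hg
  let T : L2 n →ₗᵢ[ℂ] Lp (α := EM n) ℂ 2 volume := Lp.compMeasurePreservingₗᵢ ℂ (mE n) (mp_mE n)
  let S : Lp (α := EM n) ℂ 2 volume →ₗᵢ[ℂ] L2 n :=
    Lp.compMeasurePreservingₗᵢ ℂ (mE n).symm (mp_symm n)
  have hT : ∀ φ : L2 n, T φ =ᵐ[volume] fun y => φ (mE n y) := fun φ =>
    Lp.coeFn_compMeasurePreserving φ (mp_mE n)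
  have hS : ∀ φ, S φ =ᵐ[volume] fun y => φ ((mE n).symm y) := fun φ =>
    Lp.coeFn_compMeasurePreserving φ (mp_symm n)
  have hST : ∀ φ, S (T φ) = φ := fun φ => by
    refine Lp.ext ?_
    filter_upwards [hS (T φ), (mp_symm n).quasiMeasurePreserving.ae (hT φ)] with y h1 h2
    rw [h1, h2, LinearEquiv.apply_symm_apply]
  have hTg : T g = 0 := by
    refine core (T f) (T g) ?_ (fun h => |h.det| ^ (-(n : ℝ) / 2)) ?_ ?_
    · intro h0
      apply hf0
      rw [← hST f, h0, map_zero]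
    · intro h hh
      exact (Real.rpow_pos_of_pos (abs_pos.2 hh) _).ne'
    · intro h hh x
      let r := ρ (mE n x, h)
      refine ⟨T.toContinuousLinearMap.comp
        ((r : L2 n →L[ℂ] L2 n).comp S.toContinuousLinearMap), ?_, ?_⟩
      · intro φ
        change T (r (S φ)) =ᵐ[volume] _
        have hu : IsUnit h.det := isUnit_iff_ne_zero.2 hh
        let A := leftMulE h⁻¹ h (Matrix.nonsing_inv_mul _ hu) (Matrix.mul_nonsing_inv _ hu)
        have q : Measure.QuasiMeasurePreserving (fun y => A (y - x)) volume volume :=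
          (qmp A).comp (measurePreserving_sub_right volume x).quasiMeasurePreserving
        have q2 := (mp_mE n).quasiMeasurePreserving.comp q
        filter_upwards [hT (r (S φ)), (mp_mE n).quasiMeasurePreserving.ae (hρ (mE n x) h hh (S φ)),
          q2.ae (hS φ)] with y h1 h2 h3
        have e : mE n (A (y - x)) = h⁻¹ * (mE n y - mE n x) := by
          change mE n ((mE n).symm (h⁻¹ * mE n (y - x))) = _
          rw [LinearEquiv.apply_symm_apply, map_sub]
        simp only [Function.comp_apply] at h3
        rw [e] at h3
        rw [h1, h2, h3, map_sub]
      · change inner ℂ (T g) (T (r (S (T f)))) = 0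
        rw [hST, T.inner_map_map]
        exact Submodule.inner_left_of_mem_orthogonal (hinv _ _ hh f hfK) hg
  rw [← hST g, hTg, map_zero]
end
end

section
/- With F and P the explicit tile and discrete set in GL_n(ℝ) defined below, the pair (F,P) is a tiling system: (i) F̄·p ∩ F̄·q has Lebesgue measure zero (as a subset of ℝ^{n²}) for every pair of distinct p, q ∈ P, and (ii) GL_n(ℝ) \ ⋃_{p∈P} F̄·p has Lebesgue measure zero; here F̄ is the closure of F in GL_n(ℝ) and F̄·p = {ap : a ∈ F̄}. -/
noncomputable section

/-- The tile `F ⊆ GL_n(ℝ)`: matrices `s • (k * w * y)` with `s ∈ [1,2)`,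
`k` orthogonal, `w = diag(w₁, …, w_{n-1}, (w₁⋯w_{n-1})⁻¹)` with each `w_i ∈ [1,2)`,
and `y` unit upper triangular with strict upper entries in `[0,1)`. -/
def Fset (n : ℕ) : Set (Mn n) :=
  {a | ∃ (s : ℝ) (k : Mn n) (wd : Fin n → ℝ) (y : Mn n),
    s ∈ Set.Ico (1 : ℝ) 2 ∧
    k.transpose * k = 1 ∧
    (∀ i : Fin n, (i : ℕ) < n - 1 → wd i ∈ Set.Ico (1 : ℝ) 2) ∧
    (∀ i : Fin n, (i : ℕ) = n - 1 →
      wd i = (∏ j ∈ Finset.filter (fun j : Fin n => (j : ℕ) < n - 1) Finset.univ, wd j)⁻¹) ∧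
    (∀ i, y i i = 1) ∧ (∀ i j : Fin n, j < i → y i j = 0) ∧
    (∀ i j : Fin n, i < j → y i j ∈ Set.Ico (0 : ℝ) 1) ∧
    a = s • (k * Matrix.diagonal wd * y)}

/-- The discrete set `P ⊆ GL_n(ℝ)`: matrices `2^λ • u` with `u` upper triangular,
`u_{ii} = 2^{κ_i}`, `u_{ij} = 2^{κ_j} μ_{ij}` for `i < j`, where `λ, κ_i, μ_{ij} ∈ ℤ`
and `κ₁ + ⋯ + κ_n = 0` (i.e. `κ_n = -(κ₁ + ⋯ + κ_{n-1})`). -/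
def Pset (n : ℕ) : Set (Mn n) :=
  {p | ∃ (lam : ℤ) (κ : Fin n → ℤ) (μ : Fin n → Fin n → ℤ),
    (∑ i, κ i) = 0 ∧
    p = (2 : ℝ) ^ lam • Matrix.of (fun i j : Fin n =>
      if i = j then (2 : ℝ) ^ (κ i)
      else if i < j then (2 : ℝ) ^ (κ j) * (μ i j : ℝ)
      else 0)}

/-- The enlarged tile `F_o`: as `F`, but with `s, w_i ∈ (1-ε, 2+ε)` and strict upper
entries of `y` in `(-ε, 1+ε)`. -/
def FoSet (n : ℕ) (ε : ℝ) : Set (Mn n) :=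
  {a | ∃ (s : ℝ) (k : Mn n) (wd : Fin n → ℝ) (y : Mn n),
    s ∈ Set.Ioo (1 - ε) (2 + ε) ∧
    k.transpose * k = 1 ∧
    (∀ i : Fin n, (i : ℕ) < n - 1 → wd i ∈ Set.Ioo (1 - ε) (2 + ε)) ∧
    (∀ i : Fin n, (i : ℕ) = n - 1 →
      wd i = (∏ j ∈ Finset.filter (fun j : Fin n => (j : ℕ) < n - 1) Finset.univ, wd j)⁻¹) ∧
    (∀ i, y i i = 1) ∧ (∀ i j : Fin n, j < i → y i j = 0) ∧
    (∀ i j : Fin n, i < j → y i j ∈ Set.Ioo (-ε) (1 + ε)) ∧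
    a = s • (k * Matrix.diagonal wd * y)}

open MeasureTheory

def Phi {n : ℕ} (s : ℝ) (k : Mn n) (w : Fin n → ℝ) (y : Mn n) : Mn n :=
  s • (k * Matrix.diagonal w * y)

def UU {n : ℕ} (y : Mn n) : Prop := (∀ i, y i i = 1) ∧ ∀ i j : Fin n, j < i → y i j = 0

structure Good {n : ℕ} (s : ℝ) (k : Mn n) (w : Fin n → ℝ) (y : Mn n) : Prop where
  hs : 0 < s
  hk : k.transpose * k = 1
  hw : ∀ i, 0 < w i
  hp : ∏ i, w i = 1
  hy : UU y

/-- Uniqueness of the Cholesky factor. -/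
theorem chol_uniq {n : ℕ} (R S : Mn n) (hR : ∀ i j : Fin n, j < i → R i j = 0)
    (hS : ∀ i j : Fin n, j < i → S i j = 0) (hR' : ∀ i, 0 < R i i) (hS' : ∀ i, 0 < S i i)
    (h : R.transpose * R = S.transpose * S) : R = S := by
  have key : ∀ i : Fin n, ∀ j, R i j = S i j := by
    intro i
    induction i using WellFoundedLT.induction with
    | ind i ih =>
      have e : ∀ (T : Mn n), (∀ i j : Fin n, j < i → T i j = 0) → ∀ j,
          (T.transpose * T) i j = T i i * T i j + ∑ l ∈ Finset.univ.filter (· < i), T l i * T l j := by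
        intro T hT j
        rw [Matrix.mul_apply, ← Finset.add_sum_erase _ _ (Finset.mem_univ i)]
        simp only [Matrix.transpose_apply]
        congr 1
        symm
        apply Finset.sum_subset
        · intro l hl
          simp at hl ⊢
          exact ne_of_lt hl
        · intro l hl hl2
          simp at hl hl2
          rw [hT l i (lt_of_le_of_ne hl2 (Ne.symm hl)), zero_mul]
      have e2 : ∀ j, R i i * R i j = S i i * S i j := by
        intro j
        have h1 := e R hR j
        have h2 := e S hS j
        have h3 : ∑ l ∈ Finset.univ.filter (· < i), R l i * R l j
            = ∑ l ∈ Finset.univ.filter (· < i), S l i * S l j := by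
          apply Finset.sum_congr rfl
          intro l hl
          simp at hl
          rw [ih l hl, ih l hl]
        rw [h] at h1
        linarith
      have e3 : R i i = S i i := by
        have := e2 i
        nlinarith [hR' i, hS' i]
      intro j
      have := e2 j
      rw [e3] at this
      exact mul_left_cancel₀ (hS' i).ne' this
  ext i j
  exact key i j

theorem Phi_entry {n : ℕ} (s : ℝ) (w : Fin n → ℝ) (y : Mn n) (i j : Fin n) :
    (s • (Matrix.diagonal w * y)) i j = s * (w i * y i j) := by
  simp [Matrix.diagonal_mul]

theorem iwa_uniq {n : ℕ} (hn : 1 ≤ n) {s s' : ℝ} {k k' : Mn n} {w w' : Fin n → ℝ} {y y' : Mn n}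
    (h : Good s k w y) (h' : Good s' k' w' y') (e : Phi s k w y = Phi s' k' w' y') :
    s = s' ∧ w = w' ∧ y = y' := by
  have gram : ∀ {s : ℝ} {k : Mn n} {w : Fin n → ℝ} {y : Mn n}, Good s k w y →
      (Phi s k w y).transpose * Phi s k w y =
        (s • (Matrix.diagonal w * y)).transpose * (s • (Matrix.diagonal w * y)) := by
    intro s k w y h
    have : Phi s k w y = k * (s • (Matrix.diagonal w * y)) := by
      simp [Phi, Matrix.mul_assoc]
    rw [this, Matrix.transpose_mul, Matrix.mul_assoc, ← Matrix.mul_assoc k.transpose, h.hk,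
      Matrix.one_mul]
  have hRS := chol_uniq (s • (Matrix.diagonal w * y)) (s' • (Matrix.diagonal w' * y'))
    (by intro i j hij; rw [Phi_entry, h.hy.2 i j hij]; simp)
    (by intro i j hij; rw [Phi_entry, h'.hy.2 i j hij]; simp)
    (by intro i; rw [Phi_entry, h.hy.1]; have := h.hs; have := h.hw i; positivity)
    (by intro i; rw [Phi_entry, h'.hy.1]; have := h'.hs; have := h'.hw i; positivity)
    (by rw [← gram h, ← gram h', e])
  have ent : ∀ i j, s * (w i * y i j) = s' * (w' i * y' i j) := by
    intro i j
    rw [← Phi_entry, ← Phi_entry, hRS]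
  have hd : ∀ i, s * w i = s' * w' i := by
    intro i
    have := ent i i
    rw [h.hy.1, h'.hy.1] at this
    simpa using this
  have hs : s = s' := by
    have : ∏ i, s * w i = ∏ i, s' * w' i := Finset.prod_congr rfl fun i _ => hd i
    rw [Finset.prod_mul_distrib, Finset.prod_mul_distrib, h.hp, h'.hp] at this
    simp at this
    exact (pow_left_inj₀ h.hs.le h'.hs.le (by omega)).1 this
  subst hs
  have hw : w = w' := by
    ext i
    exact mul_left_cancel₀ h.hs.ne' (hd i)
  subst hw
  refine ⟨rfl, rfl, ?_⟩
  ext i j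
  exact mul_left_cancel₀ (h.hw i).ne' (mul_left_cancel₀ h.hs.ne' (ent i j))

/-- The conjugated unipotent part. -/
def cj {n : ℕ} (D : Fin n → ℝ) (z : Mn n) : Mn n := Matrix.of fun i j => (D i)⁻¹ * z i j * D j

theorem UU.mul {n : ℕ} {y z : Mn n} (hy : UU y) (hz : UU z) : UU (y * z) := by
  constructor
  · intro i
    rw [Matrix.mul_apply, Finset.sum_eq_single i]
    · rw [hy.1, hz.1, one_mul]
    · intro l _ hl
      rcases lt_or_gt_of_ne hl with h | h
      · rw [hy.2 _ _ h, zero_mul]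
      · rw [hz.2 _ _ h, mul_zero]
    · simp
  · intro i j hij
    rw [Matrix.mul_apply]
    apply Finset.sum_eq_zero
    intro l _
    rcases lt_or_ge l i with h | h
    · rw [hy.2 _ _ h, zero_mul]
    · rw [hz.2 _ _ (lt_of_lt_of_le hij h), mul_zero]

theorem UU.cj {n : ℕ} {y : Mn n} (hy : UU y) {D : Fin n → ℝ} (hD : ∀ i, 0 < D i) :
    UU (cj D y) := by
  constructor
  · intro i
    have := (hD i).ne'
    simp [_root_.cj, hy.1, this]
  · intro i j hij
    simp [_root_.cj, hy.2 i j hij]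

theorem Phi_act {n : ℕ} (s : ℝ) (k : Mn n) (w : Fin n → ℝ) (y : Mn n) (c : ℝ) (M : Mn n)
    (D : Fin n → ℝ) (hD : ∀ i, 0 < D i) :
    Phi s k w y * (c • (M * Matrix.diagonal D)) = Phi (s * c) k (w * D) (cj D (y * M)) := by
  have : Matrix.diagonal w * (y * (M * Matrix.diagonal D))
      = Matrix.diagonal (w * D) * cj D (y * M) := by
    ext i j
    have := (hD i).ne'
    rw [← Matrix.mul_assoc y]
    simp only [Matrix.diagonal_mul, Matrix.mul_diagonal, cj, Matrix.of_apply, Pi.mul_apply]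
    field_simp
  unfold Phi
  rw [Matrix.smul_mul, Matrix.mul_smul, smul_smul, Matrix.mul_assoc, Matrix.mul_assoc, this,
    Matrix.mul_assoc]

theorem Good.act {n : ℕ} {s : ℝ} {k : Mn n} {w : Fin n → ℝ} {y : Mn n} (h : Good s k w y)
    {c : ℝ} {M : Mn n} {D : Fin n → ℝ} (hc : 0 < c) (hM : UU M) (hD : ∀ i, 0 < D i)
    (hD1 : ∏ i, D i = 1) : Good (s * c) k (w * D) (cj D (y * M)) where
  hs := mul_pos h.hs hc
  hk := h.hk
  hw := fun i => mul_pos (h.hw i) (hD i)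
  hp := by simp [Finset.prod_mul_distrib, h.hp, hD1]
  hy := (h.hy.mul hM).cj hD

theorem g_det {n : ℕ} {c : ℝ} {M : Mn n} {D : Fin n → ℝ} (hc : 0 < c) (hM : UU M)
    (hD1 : ∏ i, D i = 1) : (c • (M * Matrix.diagonal D)).det ≠ 0 := by
  have : M.det = 1 := by
    rw [Matrix.det_of_isUpperTriangular (fun i j hij => hM.2 i j hij)]
    simp [hM.1]
  simp [this, hD1, hc.ne']

/-- QR decomposition. -/
theorem qr {n : ℕ} (a : Mn n) (ha : a.det ≠ 0) : ∃ k R : Mn n, k.transpose * k = 1 ∧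
    (∀ i j : Fin n, j < i → R i j = 0) ∧ (∀ i, 0 < R i i) ∧ a = k * R := by
  let f : Fin n → EuclideanSpace ℝ (Fin n) := fun j => WithLp.toLp 2 (fun i => a i j)
  let q := InnerProductSpace.gramSchmidtOrthonormalBasis (𝕜 := ℝ) (by simp) f
  let k : Mn n := Matrix.of fun i j => q j i
  let R : Mn n := Matrix.of fun i j => inner ℝ (q i) (f j)
  have hk : k.transpose * k = 1 := by
    ext i j
    have := q.inner_eq_ite i j
    rw [PiLp.inner_apply] at this
    rw [Matrix.mul_apply, Matrix.one_apply, ← this]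
    apply Finset.sum_congr rfl
    intro l _
    simp [k, mul_comm]
  have haR : a = k * R := by
    ext i j
    have := q.sum_repr' (f j)
    have := congrArg (fun v : EuclideanSpace ℝ (Fin n) => v i) this
    simp only [WithLp.ofLp_sum, Finset.sum_apply, WithLp.ofLp_smul, Pi.smul_apply] at this
    rw [Matrix.mul_apply]
    refine Eq.trans this.symm ?_
    apply Finset.sum_congr rfl
    intro l _
    simp [k, R, mul_comm]
  have hR : ∀ i j : Fin n, j < i → R i j = 0 := by
    intro i j hij
    exact InnerProductSpace.gramSchmidtOrthonormalBasis_inv_triangular _ f hij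
  have hRd : ∀ i, R i i ≠ 0 := by
    have : R.det ≠ 0 := by
      intro h
      rw [haR, Matrix.det_mul, h, mul_zero] at ha
      exact ha rfl
    rw [Matrix.det_of_isUpperTriangular (fun i j hij => hR i j hij)] at this
    intro i
    exact Finset.prod_ne_zero_iff.1 this i (Finset.mem_univ _)
  let e : Fin n → ℝ := fun i => SignType.sign (R i i)
  have he : ∀ i, e i * e i = 1 := by
    intro i
    rcases lt_or_gt_of_ne (hRd i) with h | h <;> simp [e, h]
  have hee : Matrix.diagonal e * Matrix.diagonal e = 1 := by
    rw [Matrix.diagonal_mul_diagonal]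
    simp [he]
  refine ⟨k * Matrix.diagonal e, Matrix.diagonal e * R, ?_, ?_, ?_, ?_⟩
  · rw [Matrix.transpose_mul, Matrix.mul_assoc, ← Matrix.mul_assoc k.transpose, hk,
      Matrix.diagonal_transpose, Matrix.one_mul, hee]
  · intro i j hij
    simp [Matrix.diagonal_mul, hR i j hij]
  · intro i
    rw [Matrix.diagonal_mul]
    simp only [e]
    rw [sign_mul_self]
    simpa using hRd i
  · rw [Matrix.mul_assoc, ← Matrix.mul_assoc (Matrix.diagonal e), hee, Matrix.one_mul, haR]

theorem iwa_exists {n : ℕ} (hn : 1 ≤ n) (a : Mn n) (ha : a.det ≠ 0) :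
    ∃ s k w y, Good s k w y ∧ a = Phi s k w y := by
  obtain ⟨k, R, hk, hR, hR', haR⟩ := qr a ha
  have hP : 0 < ∏ i, R i i := Finset.prod_pos fun i _ => hR' i
  obtain ⟨t, ht, htn⟩ : ∃ t : ℝ, 0 < t ∧ t ^ n = ∏ i, R i i :=
    ⟨(∏ i, R i i) ^ ((n : ℝ)⁻¹), Real.rpow_pos_of_pos hP _,
      Real.rpow_inv_natCast_pow hP.le (by omega)⟩
  refine ⟨t, k, fun i => R i i / t, Matrix.of fun i j => R i j / R i i,
    ⟨ht, hk, fun i => div_pos (hR' i) ht, ?_, ?_, ?_⟩, ?_⟩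
  · rw [Finset.prod_div_distrib, ← htn]
    have := ht.ne'
    simp [this]
  · intro i
    simp [(hR' i).ne']
  · intro i j hij
    simp [hR i j hij]
  · rw [haR, Phi, Matrix.mul_assoc, ← Matrix.mul_smul]
    congr 1
    ext i j
    rw [Phi_entry]
    have := (hR' i).ne'
    have := ht.ne'
    simp
    field_simp

theorem mul_expand {n : ℕ} {y z : Mn n} (hy : UU y) (hz : UU z) {i j : Fin n} (hij : i < j) :
    (y * z) i j = y i j + z i j + ∑ l ∈ Finset.Ioo i j, y i l * z l j := by
  rw [Matrix.mul_apply]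
  have h1 : ∑ l ∈ Finset.Icc i j, y i l * z l j = ∑ l, y i l * z l j := by
    apply Finset.sum_subset (Finset.subset_univ _)
    intro l _ hl
    simp only [Finset.mem_Icc, not_and_or, not_le] at hl
    rcases hl with h | h
    · rw [hy.2 _ _ h, zero_mul]
    · rw [hz.2 _ _ h, mul_zero]
  rw [← h1, ← Finset.Ioc_insert_left hij.le, Finset.sum_insert (by simp),
    ← Finset.Ioo_insert_right hij, Finset.sum_insert (by simp), hy.1, hz.1]
  ring

/-- Integer unit upper triangular matrix. -/
def IM {n : ℕ} (μ : Fin n → Fin n → ℤ) : Mn n :=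
  Matrix.of fun i j => if i = j then 1 else if i < j then (μ i j : ℝ) else 0

theorem IM_UU {n : ℕ} (μ : Fin n → Fin n → ℤ) : UU (IM μ) := by
  constructor
  · intro i
    simp [IM]
  · intro i j hij
    simp [IM, hij.ne', hij.not_gt]

theorem IM_lt {n : ℕ} (μ : Fin n → Fin n → ℤ) {i j : Fin n} (hij : i < j) :
    IM μ i j = μ i j := by
  simp [IM, hij.ne, hij]

theorem dec_uniq {n : ℕ} {y y' : Mn n} (hy : UU y) (hy' : UU y')
    (h : ∀ i j : Fin n, i < j → y i j ∈ Set.Ico (0 : ℝ) 1)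
    (h' : ∀ i j : Fin n, i < j → y' i j ∈ Set.Ico (0 : ℝ) 1)
    (μ ν : Fin n → Fin n → ℤ) (e : y * IM μ = y' * IM ν) : IM μ = IM ν := by
  have key : ∀ d : ℕ, ∀ i j : Fin n, i < j → (j : ℕ) - i = d →
      y i j = y' i j ∧ IM μ i j = IM ν i j := by
    intro d
    induction d using Nat.strong_induction_on with
    | _ d ih =>
      intro i j hij hd
      have e1 := mul_expand hy (IM_UU μ) hij
      have e2 := mul_expand hy' (IM_UU ν) hij
      have e3 : ∑ l ∈ Finset.Ioo i j, y i l * IM μ l j = ∑ l ∈ Finset.Ioo i j, y' i l * IM ν l j := by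
        apply Finset.sum_congr rfl
        intro l hl
        rw [Finset.mem_Ioo, Fin.lt_def, Fin.lt_def] at hl
        rw [(ih ((l : ℕ) - i) (by omega) i l hl.1 rfl).1,
          (ih ((j : ℕ) - l) (by omega) l j hl.2 rfl).2]
      rw [e, e2, e3, IM_lt μ hij, IM_lt ν hij] at e1
      have e4 : y' i j + ν i j = y i j + μ i j := by linarith
      obtain ⟨a1, a2⟩ := h i j hij
      obtain ⟨b1, b2⟩ := h' i j hij
      have e5 : μ i j = ν i j := by
        have c1 : (μ i j : ℝ) < ν i j + 1 := by linarith
        have c2 : (ν i j : ℝ) < μ i j + 1 := by linarith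
        have c1' : μ i j < ν i j + 1 := by exact_mod_cast c1
        have c2' : ν i j < μ i j + 1 := by exact_mod_cast c2
        omega
      rw [IM_lt μ hij, IM_lt ν hij, e5]
      rw [e5] at e4
      exact ⟨by linarith, rfl⟩
  ext i j
  rcases lt_trichotomy i j with hij | hij | hij
  · exact (key _ i j hij rfl).2
  · subst hij
    rw [(IM_UU μ).1, (IM_UU ν).1]
  · rw [(IM_UU μ).2 _ _ hij, (IM_UU ν).2 _ _ hij]

theorem dec_exists {n : ℕ} (z : Mn n) (hz : UU z) : ∃ (y : Mn n) (μ : Fin n → Fin n → ℤ),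
    UU y ∧ (∀ i j : Fin n, i < j → y i j ∈ Set.Ico (0 : ℝ) 1) ∧ z = y * IM μ := by
  have key : ∀ d : ℕ, ∃ (y : Fin n → Fin n → ℝ) (μ : Fin n → Fin n → ℤ),
      ∀ i j : Fin n, i < j → (j : ℕ) - i < d → y i j ∈ Set.Ico (0 : ℝ) 1 ∧
        z i j = y i j + μ i j + ∑ l ∈ Finset.Ioo i j, y i l * μ l j := by
    intro d
    induction d with
    | zero => exact ⟨0, 0, by intro i j _ h; omega⟩
    | succ d ih =>
      obtain ⟨y, μ, h⟩ := ih
      let c : Fin n → Fin n → ℝ := fun i j => z i j - ∑ l ∈ Finset.Ioo i j, y i l * μ l j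
      refine ⟨fun i j => if (j : ℕ) - i < d then y i j else Int.fract (c i j),
        fun i j => if (j : ℕ) - i < d then μ i j else ⌊c i j⌋, ?_⟩
      intro i j hij hd
      have e3 : ∑ l ∈ Finset.Ioo i j, (if (l : ℕ) - i < d then y i l else Int.fract (c i l)) *
            ((if (j : ℕ) - l < d then μ l j else ⌊c l j⌋ : ℤ) : ℝ)
          = ∑ l ∈ Finset.Ioo i j, y i l * μ l j := by
        apply Finset.sum_congr rfl
        intro l hl
        rw [Finset.mem_Ioo, Fin.lt_def, Fin.lt_def] at hl
        rw [if_pos (by omega), if_pos (by omega)]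
      beta_reduce
      rw [e3]
      by_cases hd' : (j : ℕ) - i < d
      · rw [if_pos hd', if_pos hd']
        exact h i j hij hd'
      · rw [if_neg hd', if_neg hd']
        refine ⟨⟨Int.fract_nonneg _, Int.fract_lt_one _⟩, ?_⟩
        rw [Int.fract_add_floor]
        simp [c]
  obtain ⟨y, μ, h⟩ := key n
  let Y : Mn n := Matrix.of fun i j => if i = j then 1 else if i < j then y i j else 0
  have hY : UU Y := by
    constructor
    · intro i
      simp [Y]
    · intro i j hij
      simp [Y, hij.ne', hij.not_gt]
  have Ylt : ∀ i j : Fin n, i < j → Y i j = y i j := by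
    intro i j hij
    simp [Y, hij.ne, hij]
  refine ⟨Y, μ, hY, ?_, ?_⟩
  · intro i j hij
    rw [Ylt i j hij]
    exact (h i j hij (by omega)).1
  · ext i j
    have hU := hY.mul (IM_UU μ)
    rcases lt_trichotomy i j with hij | hij | hij
    · rw [mul_expand hY (IM_UU μ) hij, (h i j hij (by omega)).2, Ylt i j hij, IM_lt μ hij]
      congr 1
      apply Finset.sum_congr rfl
      intro l hl
      rw [Finset.mem_Ioo] at hl
      rw [Ylt i l hl.1, IM_lt μ hl.2]
    · subst hij
      rw [hz.1, hU.1]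
    · rw [hz.2 _ _ hij, hU.2 _ _ hij]

theorem filter_last {n : ℕ} (hn : 1 ≤ n) :
    Finset.univ.filter (fun j : Fin n => ¬ (j : ℕ) < n - 1) = {⟨n - 1, by omega⟩} := by
  ext j
  have := j.2
  simp only [Finset.mem_filter, Finset.mem_univ, true_and, Finset.mem_singleton, Fin.ext_iff]
  omega

theorem prod_split {n : ℕ} (hn : 1 ≤ n) (w : Fin n → ℝ) : ∏ i, w i =
    (∏ j ∈ Finset.filter (fun j : Fin n => (j : ℕ) < n - 1) Finset.univ, w j)
      * w ⟨n - 1, by omega⟩ := by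
  rw [← Finset.prod_filter_mul_prod_filter_not Finset.univ (fun j : Fin n => (j : ℕ) < n - 1),
    filter_last hn, Finset.prod_singleton]

theorem sum_split {n : ℕ} (hn : 1 ≤ n) (w : Fin n → ℤ) : ∑ i, w i =
    (∑ j ∈ Finset.filter (fun j : Fin n => (j : ℕ) < n - 1) Finset.univ, w j)
      + w ⟨n - 1, by omega⟩ := by
  rw [← Finset.sum_filter_add_sum_filter_not Finset.univ (fun j : Fin n => (j : ℕ) < n - 1),
    filter_last hn, Finset.sum_singleton]

/-- The constraints on `w` and `y` of the tile, in a usable form. -/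
structure InF {n : ℕ} (s : ℝ) (k : Mn n) (w : Fin n → ℝ) (y : Mn n) : Prop extends
    Good s k w y where
  s1 : s ∈ Set.Ico (1 : ℝ) 2
  w1 : ∀ i : Fin n, (i : ℕ) < n - 1 → w i ∈ Set.Ico (1 : ℝ) 2
  y1 : ∀ i j : Fin n, i < j → y i j ∈ Set.Ico (0 : ℝ) 1

theorem mem_F {n : ℕ} (hn : 1 ≤ n) (a : Mn n) :
    a ∈ Fset n ↔ ∃ s k w y, InF s k w y ∧ a = Phi s k w y := by
  constructor
  · rintro ⟨s, k, w, y, hs, hk, hw, hwl, hy1, hy0, hy, rfl⟩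
    have hP : 0 < ∏ j ∈ Finset.filter (fun j : Fin n => (j : ℕ) < n - 1) Finset.univ, w j := by
      apply Finset.prod_pos
      intro j hj
      have := (hw j (by simpa using hj)).1
      linarith
    refine ⟨s, k, w, y, ⟨⟨by linarith [hs.1], hk, ?_, ?_, hy1, hy0⟩, hs, hw, hy⟩, rfl⟩
    · intro i
      by_cases hi : (i : ℕ) < n - 1
      · linarith [(hw i hi).1]
      · rw [hwl i (by omega)]
        positivity
    · rw [prod_split hn, hwl ⟨n - 1, by omega⟩ rfl]
      exact mul_inv_cancel₀ hP.ne'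
  · rintro ⟨s, k, w, y, h, rfl⟩
    refine ⟨s, k, w, y, h.s1, h.hk, h.w1, ?_, h.hy.1, h.hy.2, h.y1, rfl⟩
    intro i hi
    have : i = ⟨n - 1, by omega⟩ := Fin.ext hi
    rw [this]
    have := h.hp
    rw [prod_split hn] at this
    exact eq_inv_of_mul_eq_one_right this

theorem mem_P {n : ℕ} (p : Mn n) :
    p ∈ Pset n ↔ ∃ (lam : ℤ) (κ : Fin n → ℤ) (μ : Fin n → Fin n → ℤ), (∑ i, κ i) = 0 ∧
      p = (2 : ℝ) ^ lam • (IM μ * Matrix.diagonal fun i => (2 : ℝ) ^ κ i) := by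
  have : ∀ (κ : Fin n → ℤ) (μ : Fin n → Fin n → ℤ), (Matrix.of (fun i j : Fin n =>
      if i = j then (2 : ℝ) ^ (κ i)
      else if i < j then (2 : ℝ) ^ (κ j) * (μ i j : ℝ)
      else 0)) = IM μ * Matrix.diagonal fun i => (2 : ℝ) ^ κ i := by
    intro κ μ
    ext i j
    rw [Matrix.mul_diagonal]
    simp only [IM, Matrix.of_apply]
    split_ifs with h1 h2
    · rw [h1, one_mul]
    · rw [mul_comm]
    · simp
  simp only [Pset, this, Set.mem_ofPred_eq]

theorem prod_two {n : ℕ} (κ : Fin n → ℤ) (h : (∑ i, κ i) = 0) :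
    ∏ i, (2 : ℝ) ^ κ i = 1 := by
  have : ∀ s : Finset (Fin n), ∏ i ∈ s, (2 : ℝ) ^ κ i = (2 : ℝ) ^ (∑ i ∈ s, κ i) := by
    intro s
    induction s using Finset.induction_on with
    | empty => simp
    | insert a s ha ih =>
      rw [Finset.prod_insert ha, Finset.sum_insert ha, ih, zpow_add₀ (by norm_num)]
  rw [this, h, zpow_zero]

theorem zpow_uniq {s s' : ℝ} (h : s ∈ Set.Ico (1 : ℝ) 2) (h' : s' ∈ Set.Ico (1 : ℝ) 2)
    {a b : ℤ} (e : s * 2 ^ a = s' * 2 ^ b) : a = b := by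
  have aux : ∀ {s s' : ℝ} (_ : s ∈ Set.Ico (1 : ℝ) 2) (_ : s' ∈ Set.Ico (1 : ℝ) 2)
    {a b : ℤ} (_ : s * 2 ^ a = s' * 2 ^ b), a ≤ b := by
    intro s s' h h' a b e
    have pa : (0 : ℝ) < 2 ^ a := by positivity
    have pb : (0 : ℝ) < 2 ^ b := by positivity
    have : (2 : ℝ) ^ a < 2 ^ (b + 1) := by
      rw [zpow_add₀ (by norm_num), zpow_one]
      nlinarith [h.1, h.2, h'.1, h'.2]
    have := (zpow_lt_zpow_iff_right₀ (by norm_num : (1 : ℝ) < 2)).1 this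
    omega
  exact le_antisymm (aux h h' e) (aux h' h e.symm)

theorem F_cover {n : ℕ} (hn : 1 ≤ n) (a : Mn n) (ha : a.det ≠ 0) :
    ∃ p ∈ Pset n, ∃ b ∈ Fset n, b * p = a := by
  obtain ⟨t, k, W, Y, h, rfl⟩ := iwa_exists hn a ha
  obtain ⟨lam, hl1, hl2⟩ := exists_mem_Ico_zpow h.hs (by norm_num : (1 : ℝ) < 2)
  have hW := fun i => exists_mem_Ico_zpow (h.hw i) (by norm_num : (1 : ℝ) < 2)
  choose κ0 hκ0 using hW
  let κ : Fin n → ℤ := fun i => if (i : ℕ) < n - 1 then κ0 i else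
    - ∑ j ∈ Finset.filter (fun j : Fin n => (j : ℕ) < n - 1) Finset.univ, κ0 j
  have hκs : ∑ i, κ i = 0 := by
    rw [sum_split hn]
    have e1 : ∑ j ∈ Finset.filter (fun j : Fin n => (j : ℕ) < n - 1) Finset.univ, κ j =
        ∑ j ∈ Finset.filter (fun j : Fin n => (j : ℕ) < n - 1) Finset.univ, κ0 j := by
      apply Finset.sum_congr rfl
      intro j hj
      exact if_pos (by simpa using hj)
    rw [e1]
    simp [κ]
  have hD : ∀ i, (0 : ℝ) < 2 ^ κ i := fun i => by positivity
  have hD' : ∀ i, (0 : ℝ) < (fun i => ((2 : ℝ) ^ κ i)⁻¹) i := fun i => by positivity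
  obtain ⟨y, μ, hy, hy01, hz⟩ := dec_exists (cj (fun i => ((2 : ℝ) ^ κ i)⁻¹) Y) (h.hy.cj hD')
  have ico : ∀ {x : ℝ} {m : ℤ}, 2 ^ m ≤ x → x < 2 ^ (m + 1) →
      x * ((2 : ℝ) ^ m)⁻¹ ∈ Set.Ico (1 : ℝ) 2 := by
    intro x m h1 h2
    have pm : (0 : ℝ) < 2 ^ m := by positivity
    rw [zpow_add₀ (by norm_num), zpow_one] at h2
    constructor
    · rw [← div_eq_mul_inv, le_div_iff₀ pm, one_mul]
      exact h1
    · rw [← div_eq_mul_inv, div_lt_iff₀ pm, mul_comm]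
      exact h2
  have pl : (0 : ℝ) < 2 ^ lam := by positivity
  refine ⟨_, (mem_P _).2 ⟨lam, κ, μ, hκs, rfl⟩,
    Phi (t * (2 ^ lam)⁻¹) k (fun i => W i * ((2 : ℝ) ^ κ i)⁻¹) y,
    (mem_F hn _).2 ⟨_, _, _, _, ⟨⟨?_, h.hk, ?_, ?_, hy⟩, ico hl1 hl2, ?_, hy01⟩, rfl⟩, ?_⟩
  · have := h.hs
    positivity
  · intro i
    exact mul_pos (h.hw i) (hD' i)
  · rw [Finset.prod_mul_distrib, h.hp, Finset.prod_inv_distrib, prod_two κ hκs]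
    simp
  · intro i hi
    have : κ i = κ0 i := if_pos hi
    rw [this]
    exact ico (hκ0 i).1 (hκ0 i).2
  · rw [Phi_act _ _ _ _ _ _ _ hD, ← hz]
    congr 1
    · field_simp
    · ext i
      have := (hD i).ne'
      simp only [Pi.mul_apply]
      field_simp
    · ext i j
      have := (hD i).ne'
      have := (hD j).ne'
      simp only [cj, Matrix.of_apply]
      field_simp

theorem F_disj {n : ℕ} (hn : 1 ≤ n) {p q : Mn n} (hp : p ∈ Pset n) (hq : q ∈ Pset n)
    {a b : Mn n} (ha : a ∈ Fset n) (hb : b ∈ Fset n) (e : a * p = b * q) : p = q := by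
  obtain ⟨lam, κ, μ, hκ, rfl⟩ := (mem_P _).1 hp
  obtain ⟨lam', κ', μ', hκ', rfl⟩ := (mem_P _).1 hq
  obtain ⟨s, k, w, y, h, rfl⟩ := (mem_F hn _).1 ha
  obtain ⟨s', k', w', y', h', rfl⟩ := (mem_F hn _).1 hb
  have hD : ∀ i, (0 : ℝ) < (fun i => (2 : ℝ) ^ κ i) i := fun i => by positivity
  have hD' : ∀ i, (0 : ℝ) < (fun i => (2 : ℝ) ^ κ' i) i := fun i => by positivity
  rw [Phi_act _ _ _ _ _ _ _ hD, Phi_act _ _ _ _ _ _ _ hD'] at e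
  obtain ⟨e1, e2, e3⟩ := iwa_uniq hn
    (h.toGood.act (by positivity) (IM_UU μ) hD (prod_two κ hκ))
    (h'.toGood.act (by positivity) (IM_UU μ') hD' (prod_two κ' hκ')) e
  have hl := zpow_uniq h.s1 h'.s1 e1
  subst hl
  have hk1 : ∀ i : Fin n, (i : ℕ) < n - 1 → κ i = κ' i := by
    intro i hi
    exact zpow_uniq (h.w1 i hi) (h'.w1 i hi) (congrFun e2 i)
  have hk : κ = κ' := by
    ext i
    by_cases hi : (i : ℕ) < n - 1
    · exact hk1 i hi
    · have : i = ⟨n - 1, by omega⟩ := Fin.ext (by simp; omega)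
      rw [this]
      rw [sum_split hn] at hκ hκ'
      have e1 : ∑ j ∈ Finset.filter (fun j : Fin n => (j : ℕ) < n - 1) Finset.univ, κ j =
          ∑ j ∈ Finset.filter (fun j : Fin n => (j : ℕ) < n - 1) Finset.univ, κ' j := by
        apply Finset.sum_congr rfl
        intro j hj
        exact hk1 j (by simpa using hj)
      omega
  subst hk
  have e4 : y * IM μ = y' * IM μ' := by
    ext i j
    have := congrFun (congrFun e3 i) j
    simp only [cj, Matrix.of_apply] at this
    exact mul_left_cancel₀ (inv_ne_zero (hD i).ne') (mul_right_cancel₀ (hD j).ne' this)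
  rw [dec_uniq h.hy h'.hy h.y1 h'.y1 μ μ' e4]

theorem vol_image {n : ℕ} (g : Mn n) : ∃ r : ENNReal, (g.det ≠ 0 → r ≠ 0) ∧
    ∀ E : Set (Mn n), volume ((· * g) '' E) = r * volume E := by
  let L : Mn n →ₗ[ℝ] Mn n := LinearMap.mulRight ℝ g
  let L' : (Fin n → Fin n → ℝ) →ₗ[ℝ] (Fin n → Fin n → ℝ) := L
  refine ⟨ENNReal.ofReal |LinearMap.det L'|, ?_, ?_⟩
  · intro hg
    have hinj : Function.Injective L := by
      intro a b hab
      have hab' : a * g = b * g := hab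
      have := congrArg (· * g⁻¹) hab'
      simpa [Matrix.mul_assoc, Matrix.mul_nonsing_inv g (isUnit_iff_ne_zero.2 hg)] using this
    have : LinearMap.det L' ≠ 0 := by
      have h2 : IsUnit L' := by
        rw [Module.End.isUnit_iff]
        exact ⟨hinj, (LinearMap.injective_iff_surjective (f := L')).1 hinj⟩
      exact (h2.map (LinearMap.det (M := Fin n → Fin n → ℝ) (A := ℝ))).ne_zero
    simp [this]
  · intro E
    exact Measure.addHaar_image_linearMap (volume : Measure (Fin n → Fin n → ℝ)) L' E

theorem compact_meas {n : ℕ} {E : Set (Mn n)} (hE : IsCompact E) : MeasurableSet E := by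
  have : IsCompact (X := Fin n → Fin n → ℝ) E := hE
  exact IsCompact.measurableSet (α := Fin n → Fin n → ℝ) this

theorem null_of_disj {n : ℕ} {E : Set (Mn n)} (hE : IsCompact E) (g : ℝ → Mn n)
    (hg : ∀ c, 0 < c → (g c).det ≠ 0)
    (hd : ∀ c, 0 < c → ∀ d, 0 < d → ∀ a ∈ E, ∀ b ∈ E, a * g c = b * g d → c = d) :
    volume E = 0 := by
  by_contra hne
  let As : Set.Ioi (0 : ℝ) → Set (Fin n → Fin n → ℝ) := fun c => (fun a : Mn n => a * g c) '' E
  have hc := Measure.countable_meas_pos_of_disjoint_iUnion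
    (μ := (volume : Measure (Fin n → Fin n → ℝ))) (As := As)
    (fun c => compact_meas (hE.image (by fun_prop)))
    (by
      intro c d hcd
      refine Set.disjoint_left.2 ?_
      rintro x ⟨a, ha, rfl⟩ ⟨b, hb, e⟩
      exact hcd (Subtype.ext (hd c c.2 d d.2 a ha b hb e.symm)))
  have hall : {i | 0 < (volume : Measure (Fin n → Fin n → ℝ)) (As i)} = Set.univ := by
    apply Set.eq_univ_of_forall
    intro c
    obtain ⟨r, hr, hr2⟩ := vol_image (g c)
    have h3 : (volume : Measure (Fin n → Fin n → ℝ)) (As c) = r * (volume E) := hr2 E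
    show 0 < (volume : Measure (Fin n → Fin n → ℝ)) (As c)
    rw [h3]
    exact pos_iff_ne_zero.2 (mul_ne_zero (hr (hg c c.2)) hne)
  rw [hall, Set.countable_univ_iff] at hc
  have h0 : (volume : Measure ℝ) (Set.Ioi 0) = 0 :=
    (Set.countable_coe_iff.1 hc).measure_zero volume
  simp at h0

/-- Closed parameter set. -/
def KK (n : ℕ) : Set (ℝ × Mn n × (Fin n → ℝ) × Mn n) :=
  {x | x.1 ∈ Set.Icc (1 : ℝ) 2 ∧ x.2.1.transpose * x.2.1 = 1 ∧
    (∀ i, x.2.2.1 i ∈ Set.Icc (0 : ℝ) 2) ∧ (∀ i : Fin n, (i : ℕ) < n - 1 → 1 ≤ x.2.2.1 i) ∧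
    ∏ i, x.2.2.1 i = 1 ∧ (∀ i, x.2.2.2 i i = 1) ∧ (∀ i j : Fin n, j < i → x.2.2.2 i j = 0) ∧
    (∀ i j : Fin n, x.2.2.2 i j ∈ Set.Icc (0 : ℝ) 1)}

def PhiX {n : ℕ} (x : ℝ × Mn n × (Fin n → ℝ) × Mn n) : Mn n := Phi x.1 x.2.1 x.2.2.1 x.2.2.2

theorem PhiX_cont {n : ℕ} : Continuous (PhiX (n := n)) := by
  have c1 : Continuous fun x : ℝ × Mn n × (Fin n → ℝ) × Mn n => x.1 := by fun_prop
  have c2 : Continuous fun x : ℝ × Mn n × (Fin n → ℝ) × Mn n => x.2.1 := by fun_prop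
  have c3 : Continuous fun x : ℝ × Mn n × (Fin n → ℝ) × Mn n => x.2.2.1 := by fun_prop
  have c4 : Continuous fun x : ℝ × Mn n × (Fin n → ℝ) × Mn n => x.2.2.2 := by fun_prop
  exact c1.smul ((c2.matrix_mul c3.matrix_diagonal).matrix_mul c4)

theorem closed_all {X : Type*} {ι : Sort*} [TopologicalSpace X] {p : ι → X → Prop}
    (h : ∀ i, IsClosed {x | p i x}) : IsClosed {x | ∀ i, p i x} := by
  have : {x | ∀ i, p i x} = ⋂ i, {x | p i x} := by
    ext x
    simp
  rw [this]
  exact isClosed_iInter h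

theorem KK_closed (n : ℕ) : IsClosed (KK n) := by
  let X := ℝ × Mn n × (Fin n → ℝ) × Mn n
  have ce : ∀ i j : Fin n, Continuous fun x : X => x.2.2.2 i j :=
    fun i j => Continuous.matrix_elem (by fun_prop) i j
  have cw : ∀ i : Fin n, Continuous fun x : X => x.2.2.1 i := fun i => by fun_prop
  have ck : Continuous fun x : X => x.2.1 := by fun_prop
  have h1 : IsClosed {x : X | x.1 ∈ Set.Icc (1 : ℝ) 2} := isClosed_Icc.preimage continuous_fst
  have h2 : IsClosed {x : X | x.2.1.transpose * x.2.1 = 1} :=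
    isClosed_eq (ck.matrix_transpose.matrix_mul ck) continuous_const
  have h3 : IsClosed {x : X | ∀ i, x.2.2.1 i ∈ Set.Icc (0 : ℝ) 2} :=
    closed_all fun i => isClosed_Icc.preimage (cw i)
  have h4 : IsClosed {x : X | ∀ i : Fin n, (i : ℕ) < n - 1 → 1 ≤ x.2.2.1 i} :=
    closed_all fun i => closed_all fun _ => isClosed_le continuous_const (cw i)
  have h5 : IsClosed {x : X | ∏ i, x.2.2.1 i = 1} :=
    isClosed_eq (continuous_finset_prod _ fun i _ => cw i) continuous_const
  have h6 : IsClosed {x : X | ∀ i, x.2.2.2 i i = 1} :=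
    closed_all fun i => isClosed_eq (ce i i) continuous_const
  have h7 : IsClosed {x : X | ∀ i j : Fin n, j < i → x.2.2.2 i j = 0} :=
    closed_all fun i => closed_all fun j => closed_all fun _ =>
      isClosed_eq (ce i j) continuous_const
  have h8 : IsClosed {x : X | ∀ i j : Fin n, x.2.2.2 i j ∈ Set.Icc (0 : ℝ) 1} :=
    closed_all fun i => closed_all fun j => isClosed_Icc.preimage (ce i j)
  exact h1.inter (h2.inter (h3.inter (h4.inter (h5.inter (h6.inter (h7.inter h8))))))

theorem KK_compact (n : ℕ) : IsCompact (KK n) := by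
  have cm : ∀ a b : ℝ, IsCompact {m : Mn n | ∀ i j, m i j ∈ Set.Icc a b} := by
    intro a b
    have := isCompact_univ_pi (X := fun _ : Fin n => Fin n → ℝ) (fun _ : Fin n =>
      isCompact_univ_pi (X := fun _ : Fin n => ℝ) (fun _ : Fin n => isCompact_Icc (a := a) (b := b)))
    have e : {m : Mn n | ∀ i j, m i j ∈ Set.Icc a b} = (Set.univ.pi fun _ : Fin n =>
        Set.univ.pi fun _ : Fin n => Set.Icc a b : Set (Fin n → Fin n → ℝ)) := by
      ext m
      exact ⟨fun h i _ j _ => h i j, fun h i j => h i trivial j trivial⟩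
    rw [e]
    exact this
  have cv : IsCompact {w : Fin n → ℝ | ∀ i, w i ∈ Set.Icc (0 : ℝ) 2} := by
    have := isCompact_univ_pi (X := fun _ : Fin n => ℝ) (fun _ : Fin n =>
      isCompact_Icc (a := (0 : ℝ)) (b := 2))
    convert this using 1
    ext m
    simp only [Set.mem_ofPred_eq, Set.mem_pi, Set.mem_univ, true_imp_iff]
  refine IsCompact.of_isClosed_subset
    ((isCompact_Icc (a := (1 : ℝ)) (b := 2)).prod ((cm (-1) 1).prod (cv.prod (cm 0 1))))
    (KK_closed n) ?_
  rintro ⟨s, k, w, y⟩ ⟨h1, h2, h3, -, -, -, -, h8⟩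
  refine ⟨h1, ?_, h3, h8⟩
  intro i j
  have := congrFun (congrFun h2 j) j
  rw [Matrix.mul_apply, Matrix.one_apply_eq] at this
  have h5 : k i j * k i j ≤ 1 := by
    rw [← this]
    exact Finset.single_le_sum (f := fun l => k.transpose j l * k l j)
      (fun l _ => mul_self_nonneg (k l j)) (Finset.mem_univ i)
  exact abs_le.1 (abs_le_one_iff_mul_self_le_one.2 h5)

theorem KK_good {n : ℕ} {s : ℝ} {k : Mn n} {w : Fin n → ℝ} {y : Mn n}
    (h : (s, k, w, y) ∈ KK n) : Good s k w y := by
  obtain ⟨h1, h2, h3, h4, h5, h6, h7, h8⟩ := h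
  simp only at h1 h2 h3 h4 h5 h6 h7 h8
  refine ⟨by linarith [h1.1], h2, ?_, h5, h6, h7⟩
  intro i
  refine lt_of_le_of_ne (h3 i).1 (Ne.symm ?_)
  intro h0
  rw [Finset.prod_eq_zero (Finset.mem_univ i) h0] at h5
  exact zero_ne_one h5

theorem F_sub {n : ℕ} (hn : 1 ≤ n) : Fset n ⊆ PhiX '' KK n := by
  intro a ha
  obtain ⟨s, k, w, y, h, rfl⟩ := (mem_F hn _).1 ha
  refine ⟨(s, k, w, y), ⟨⟨h.s1.1, h.s1.2.le⟩, h.hk, ?_, fun i hi => (h.w1 i hi).1, h.hp, h.hy.1,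
    h.hy.2, ?_⟩, rfl⟩
  · intro i
    refine ⟨(h.hw i).le, ?_⟩
    by_cases hi : (i : ℕ) < n - 1
    · exact (h.w1 i hi).2.le
    · have hil : i = ⟨n - 1, by omega⟩ := Fin.ext (by simp; omega)
      have hp := h.hp
      rw [prod_split hn, ← hil] at hp
      have hP : 1 ≤ ∏ j ∈ Finset.filter (fun j : Fin n => (j : ℕ) < n - 1) Finset.univ, w j := by
        calc (1 : ℝ) = ∏ j ∈ Finset.filter (fun j : Fin n => (j : ℕ) < n - 1) Finset.univ, 1 := by
              simp
          _ ≤ _ := by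
              apply Finset.prod_le_prod
              · intros
                norm_num
              · intro j hj
                exact (h.w1 j (by simpa using hj)).1
      show w i ≤ 2
      nlinarith [h.hw i]
  · intro i j
    rcases lt_trichotomy i j with hij | hij | hij
    · exact ⟨(h.y1 i j hij).1, (h.y1 i j hij).2.le⟩
    · subst hij
      simp [h.hy.1]
    · simp [h.hy.2 _ _ hij]

theorem cl_sub {n : ℕ} (hn : 1 ≤ n) : closure (Fset n) ⊆ PhiX '' KK n :=
  closure_minimal (F_sub hn) ((KK_compact n).image PhiX_cont).isClosed

/-- Generic nullity of a slice of the parameter set. -/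
theorem slice_null {n : ℕ} (hn : 1 ≤ n) (C : Set (ℝ × Mn n × (Fin n → ℝ) × Mn n))
    (hC : IsClosed C) (c : ℝ → ℝ) (M : ℝ → Mn n) (D : ℝ → Fin n → ℝ)
    (hc : ∀ t, 0 < t → 0 < c t) (hM : ∀ t, 0 < t → UU (M t)) (hD : ∀ t, 0 < t → ∀ i, 0 < D t i)
    (hD1 : ∀ t, 0 < t → ∏ i, D t i = 1)
    (h : ∀ t, 0 < t → ∀ u, 0 < u → ∀ s k w y s' k' w' y', (s, k, w, y) ∈ C → (s', k', w', y') ∈ C →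
      Good s k w y → Good s' k' w' y' →
      s * c t = s' * c u → w * D t = w' * D u → cj (D t) (y * M t) = cj (D u) (y' * M u) → t = u) :
    volume (PhiX '' (KK n ∩ C)) = 0 := by
  apply null_of_disj (((KK_compact n).inter_right hC).image PhiX_cont)
    (fun t => c t • (M t * Matrix.diagonal (D t)))
  · intro t ht
    exact g_det (hc t ht) (hM t ht) (hD1 t ht)
  · rintro t ht u hu _ ⟨⟨s, k, w, y⟩, ⟨hK, hC⟩, rfl⟩ _ ⟨⟨s', k', w', y'⟩, ⟨hK', hC'⟩, rfl⟩ e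
    simp only [PhiX] at e
    rw [Phi_act _ _ _ _ _ _ _ (hD t ht), Phi_act _ _ _ _ _ _ _ (hD u hu)] at e
    obtain ⟨e1, e2, e3⟩ := iwa_uniq hn
      ((KK_good hK).act (hc t ht) (hM t ht) (hD t ht) (hD1 t ht))
      ((KK_good hK').act (hc u hu) (hM u hu) (hD u hu) (hD1 u hu)) e
    exact h t ht u hu s k w y s' k' w' y' hC hC' (KK_good hK) (KK_good hK') e1 e2 e3

theorem UU_one {n : ℕ} : UU (1 : Mn n) := ⟨fun _ => Matrix.one_apply_eq _, fun _ _ h =>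
  Matrix.one_apply_ne h.ne'⟩

theorem null_s {n : ℕ} (hn : 1 ≤ n) : volume (PhiX '' (KK n ∩ {x | x.1 = 2})) = 0 := by
  apply slice_null hn _ (isClosed_eq (by fun_prop) (by fun_prop)) (fun t => t) (fun _ => 1)
    (fun _ _ => 1)
  · exact fun t ht => ht
  · exact fun _ _ => UU_one
  · intros
    norm_num
  · simp
  · intro t ht u hu s k w y s' k' w' y' h h' _ _ e1 _ _
    have h : s = 2 := h
    have h' : s' = 2 := h'
    subst h h'
    linarith

theorem null_w {n : ℕ} (hn : 1 ≤ n) (i : Fin n) (hi : (i : ℕ) < n - 1) :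
    volume (PhiX '' (KK n ∩ {x | x.2.2.1 i = 2})) = 0 := by
  have hil : i ≠ ⟨n - 1, by omega⟩ := by
    intro h
    rw [Fin.ext_iff] at h
    simp at h
    omega
  apply slice_null hn _ (isClosed_eq (by fun_prop) (by fun_prop)) (fun _ => 1) (fun _ => 1)
    (fun t j => (if j = i then t else 1) * (if j = ⟨n - 1, by omega⟩ then t⁻¹ else 1))
  · intros
    norm_num
  · exact fun _ _ => UU_one
  · intro t ht j
    have := inv_pos.2 ht
    apply mul_pos <;> split_ifs <;> first | assumption | norm_num
  · intro t ht
    rw [Finset.prod_mul_distrib]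
    simp [ht.ne']
  · intro t ht u hu s k w y s' k' w' y' h h' _ _ _ e2 _
    have h : w i = 2 := h
    have h' : w' i = 2 := h'
    have := congrFun e2 i
    simp [hil, h, h'] at this
    exact this

theorem null_y {n : ℕ} (hn : 1 ≤ n) (i j : Fin n) (hij : i < j) :
    volume (PhiX '' (KK n ∩ {x | x.2.2.2 i j = 1})) = 0 := by
  apply slice_null hn _ (isClosed_eq (Continuous.matrix_elem (by fun_prop) i j) (by fun_prop))
    (fun _ => 1) (fun t => 1 + Matrix.single i j t) (fun _ _ => 1)
  · intros
    norm_num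
  · intro t _
    constructor
    · intro l
      have : ¬ (i = l ∧ j = l) := by
        rintro ⟨rfl, rfl⟩
        exact lt_irrefl _ hij
      simp [this]
    · intro l m hlm
      have : ¬ (i = l ∧ j = m) := by
        rintro ⟨rfl, rfl⟩
        exact lt_asymm hij hlm
      simp [this, Matrix.one_apply_ne hlm.ne']
  · intros
    norm_num
  · simp
  · intro t ht u hu s k w y s' k' w' y' h h' g g' _ _ e3
    have h : y i j = 1 := h
    have h' : y' i j = 1 := h'
    have := congrFun (congrFun e3 i) j
    simp [cj, Matrix.mul_add, h, h', g.hy.1, g'.hy.1] at this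
    exact this

theorem bdry_null {n : ℕ} (hn : 1 ≤ n) : volume (closure (Fset n) \ Fset n) = 0 := by
  have sub : closure (Fset n) \ Fset n ⊆ (PhiX '' (KK n ∩ {x | x.1 = 2})) ∪
      ((⋃ i : {i : Fin n // (i : ℕ) < n - 1}, PhiX '' (KK n ∩ {x | x.2.2.1 i = 2})) ∪
      ⋃ ij : {ij : Fin n × Fin n // ij.1 < ij.2},
        PhiX '' (KK n ∩ {x | x.2.2.2 ij.1.1 ij.1.2 = 1})) := by
    rintro a ⟨ha, haF⟩
    obtain ⟨⟨s, k, w, y⟩, hK, rfl⟩ := cl_sub hn ha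
    by_contra hcon
    simp only [Set.mem_union, Set.mem_iUnion, not_or, not_exists] at hcon
    obtain ⟨c1, c2, c3⟩ := hcon
    have hG := KK_good hK
    apply haF
    refine (mem_F hn _).2 ⟨s, k, w, y, ⟨hG, ⟨hK.1.1, lt_of_le_of_ne hK.1.2 ?_⟩, ?_, ?_⟩, rfl⟩
    · intro h
      exact c1 ⟨_, ⟨hK, h⟩, rfl⟩
    · intro i hi
      refine ⟨hK.2.2.2.1 i hi, lt_of_le_of_ne (hK.2.2.1 i).2 ?_⟩
      intro h
      exact c2 ⟨i, hi⟩ ⟨_, ⟨hK, h⟩, rfl⟩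
    · intro i j hij
      have h01 := hK.2.2.2.2.2.2.2 i j
      refine ⟨h01.1, lt_of_le_of_ne h01.2 ?_⟩
      intro h
      exact c3 ⟨(i, j), hij⟩ ⟨_, ⟨hK, h⟩, rfl⟩
  refine measure_mono_null sub (measure_union_null (null_s hn) (measure_union_null ?_ ?_))
  · exact measure_iUnion_null fun i => null_w hn i.1 i.2
  · exact measure_iUnion_null fun ij => null_y hn ij.1.1 ij.1.2 ij.2

/-- The pair `(F, P)` is a tiling system for `GL_n(ℝ)`:
(i) `F̄·p ∩ F̄·q` has Lebesgue measure zero (as a subset of `ℝ^{n²}`) for all distinct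
`p, q ∈ P`, and (ii) `GL_n(ℝ) \ ⋃_{p∈P} F̄·p` has Lebesgue measure zero, where `F̄` is
the closure of `F` and `F̄·p = {a * p : a ∈ F̄}`. -/
theorem stmt_13 (n : ℕ) (hn : 1 ≤ n) :
    (∀ p ∈ Pset n, ∀ q ∈ Pset n, p ≠ q →
      volume (((· * p) '' closure (Fset n)) ∩ ((· * q) '' closure (Fset n))) = 0) ∧
    volume ({a : Mn n | a.det ≠ 0} \ ⋃ p ∈ Pset n, (· * p) '' closure (Fset n)) = 0 := by
  constructor
  · intro p hp q hq hpq
    have nul : ∀ g : Mn n, volume ((· * g) '' (closure (Fset n) \ Fset n)) = 0 := by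
      intro g
      obtain ⟨r, -, hr⟩ := vol_image g
      rw [hr, bdry_null hn, mul_zero]
    refine measure_mono_null ?_ (measure_union_null (nul p) (nul q))
    rintro x ⟨⟨a, ha, rfl⟩, ⟨b, hb, e⟩⟩
    by_cases haF : a ∈ Fset n
    · by_cases hbF : b ∈ Fset n
      · exact absurd (F_disj hn hp hq haF hbF e.symm) hpq
      · exact Or.inr ⟨b, ⟨hb, hbF⟩, e⟩
    · exact Or.inl ⟨a, ⟨ha, haF⟩, rfl⟩
  · have : {a : Mn n | a.det ≠ 0} \ ⋃ p ∈ Pset n, (· * p) '' closure (Fset n) = ∅ := by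
      rw [Set.sdiff_eq_empty]
      intro a ha
      obtain ⟨p, hp, b, hb, e⟩ := F_cover hn a ha
      exact Set.mem_biUnion hp ⟨b, subset_closure hb, e⟩
    rw [this]
    exact measure_empty
end
end
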